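/- Let n ≥ 1, let T = diag(τ₁, …, τₙ) be a fixed n×n diagonal matrix with non-negative entries, and let W be a random n×n orthogonal matrix distributed according to the Haar probability measure on the orthogonal group O(n). Let k ≥ 1 be an integer. Then there exists a constant C_k > 0 depending only on k such that E[ ‖(T W)^k T‖_HS² ] ≤ C_k · n^{-k} · ‖T‖_HS^{2(k+1)}. -/

import Mathlib

/-!
Writing `k = m + 1`, each entry of `(T W)ᵏ T` is a sum over paths, so its square is a sum over pairs
of paths with common endpoints `a`, `b` of a product of `τ`s times a product of `2k` entries of `W`.
Two facts about the expectation of such a product of entries suffice.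

* It vanishes unless every row index occurs an even number of times (`integral_prod_eq_zero`):
  changing the sign of one row of `W` preserves Haar measure.
* It is at most `C_k n⁻ᵏ` (`integral_prod_le`). A product of `2k` reals is at most the sum of their
  `2k`-th powers, so this reduces to `E W_{ij}^{2k} ≤ (2k)! n⁻ᵏ` (`moment_le`). For that bound,
  translate `W` by an orthogonal matrix whose `i`-th row is constantly `n^{-1/2}`: this replaces
  `W_{ij}` by `n^{-1/2} ∑ₐ W_{aj}`. Expanding the power, only index tuples with even multiplicities
  survive, and the columns of `W` are unit vectors.

Both steps end with the same combinatorial estimate (`sum_evenFibers_le`): a tuple of length `2m`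
whose values all have even multiplicity is constant on the pairs of some perfect matching of its
positions, so the sum of `∏ x_{f l}` over these tuples is at most `(2m)! (∑ xᵢ²)ᵐ`. For pairs of
paths, the common starting point `a` contributes `2` to the multiplicities, so the `2m` interior
indices form such a tuple; this gives `τ_a² τ_b² (∑ τᵢ²)ᵐ`, and summing over `a`, `b` concludes.
Only left invariance of the Haar measure is used.
-/


open MeasureTheory ProbabilityTheory

/-- Matrices over ℝ carry the product measurable structure (entrywise). -/
instance matrixMeasurableSpace (m n : Type*) : MeasurableSpace (Matrix m n ℝ) :=
  inferInstanceAs (MeasurableSpace (m → n → ℝ))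

/-- The Hilbert--Schmidt norm of a real square matrix. -/
noncomputable def hsNorm {n : ℕ} (A : Matrix (Fin n) (Fin n) ℝ) : ℝ :=
  Real.sqrt (∑ i, ∑ j, (A i j) ^ 2)


section helpers

open Finset

/-! ### Tuples with even multiplicities -/

/-- Every value of the tuple `f` is taken an even number of times. -/
def EvenFibers {ι : Type*} [Fintype ι] {n : ℕ} (f : ι → Fin n) : Prop :=
  ∀ v, Even (Fintype.card {j // f j = v})

/-- The positions of a tuple with even multiplicities can be matched in pairs (`e (i, false)` with
`e (i, true)`) on which the tuple is constant. -/
lemma exists_pairing {ι : Type*} [Fintype ι] {n m : ℕ} (hι : Fintype.card ι = 2 * m)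
    (f : ι → Fin n) (hf : EvenFibers f) :
    ∃ e : Fin m × Bool ≃ ι, ∃ g : Fin m → Fin n, ∀ p, f (e p) = g p.1 := by
  choose c hc using hf
  have h1 : ∀ v, Nonempty (Fin (c v) × Bool ≃ {j // f j = v}) := fun v =>
    ⟨Fintype.equivOfCardEq (by rw [hc v]; simp [mul_two])⟩
  let E : (Σ v, Fin (c v)) × Bool ≃ ι :=
    (Equiv.sigmaProdDistrib _ _).trans
      ((Equiv.sigmaCongrRight fun v => (h1 v).some).trans (Equiv.sigmaFiberEquiv f))
  have hE : ∀ q, f (E q) = q.1.1 := fun q => ((h1 q.1.1).some (q.1.2, q.2)).2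
  have hcard : Fintype.card (Fin m) = Fintype.card (Σ v, Fin (c v)) := by
    have := Fintype.card_congr E
    rw [hι, Fintype.card_prod, Fintype.card_bool] at this
    rw [Fintype.card_fin]; omega
  let s := Fintype.equivOfCardEq hcard
  exact ⟨(Equiv.prodCongr s (Equiv.refl _)).trans E, fun i => (s i).1, fun p => hE _⟩

open Classical in
/-- A union bound over the `(2m)!` ways to list the positions as `m` ordered pairs; tuples constant
on the pairs of a given listing contribute exactly `(∑ xᵢ²)ᵐ`. -/
lemma sum_evenFibers_le {ι : Type*} [Fintype ι] [DecidableEq ι] {n m : ℕ}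
    (hι : Fintype.card ι = 2 * m) (x : Fin n → ℝ) (hx : ∀ i, 0 ≤ x i) :
    ∑ f : ι → Fin n, (if EvenFibers f then ∏ l, x (f l) else 0)
      ≤ ((2 * m).factorial : ℝ) * (∑ i, x i ^ 2) ^ m := by
  have hcard : Fintype.card (Fin m × Bool ≃ ι) = (2 * m).factorial := by
    rw [Fintype.card_equiv (Fintype.equivOfCardEq (by simp [hι, mul_comm])), Fintype.card_prod]
    simp [mul_comm]
  have key : ∀ f : ι → Fin n, (if EvenFibers f then ∏ l, x (f l) else 0) ≤
      ∑ e : Fin m × Bool ≃ ι, ∑ g : Fin m → Fin n,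
        if f = (fun l => g (e.symm l).1) then ∏ l, x (f l) else 0 := by
    intro f
    have hnn : ∀ (e : Fin m × Bool ≃ ι) (g : Fin m → Fin n),
        0 ≤ if f = (fun l => g (e.symm l).1) then ∏ l, x (f l) else 0 := by
      intro e g
      split_ifs
      · exact prod_nonneg fun _ _ => hx _
      · exact le_rfl
    split_ifs with h
    · obtain ⟨e, g, heg⟩ := exists_pairing hι f h
      have hf : f = (fun l => g (e.symm l).1) := by
        funext l; rw [← heg, Equiv.apply_symm_apply]
      calc ∏ l, x (f l) = if f = (fun l => g (e.symm l).1) then ∏ l, x (f l) else 0 := by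
            rw [if_pos hf]
        _ ≤ ∑ g : Fin m → Fin n,
              if f = (fun l => g (e.symm l).1) then ∏ l, x (f l) else 0 :=
            single_le_sum (f := fun g : Fin m → Fin n =>
              if f = (fun l => g (e.symm l).1) then ∏ l, x (f l) else 0)
              (fun g _ => hnn e g) (mem_univ g)
        _ ≤ _ := single_le_sum (f := fun e : Fin m × Bool ≃ ι => ∑ g : Fin m → Fin n,
              if f = (fun l => g (e.symm l).1) then ∏ l, x (f l) else 0)
              (fun e _ => sum_nonneg fun g _ => hnn e g) (mem_univ e)
    · exact sum_nonneg fun e _ => sum_nonneg fun g _ => hnn e g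
  calc _ ≤ _ := sum_le_sum fun f _ => key f
    _ = ∑ e : Fin m × Bool ≃ ι, ∑ g : Fin m → Fin n, ∏ i, x (g i) ^ 2 := by
        rw [sum_comm]
        refine sum_congr rfl fun e _ => ?_
        rw [sum_comm]
        refine sum_congr rfl fun g _ => ?_
        rw [sum_ite_eq' univ (fun l => g (e.symm l).1), if_pos (mem_univ _),
          ← Equiv.prod_comp e, Fintype.prod_prod_type]
        refine prod_congr rfl fun i _ => ?_
        simp [sq]
    _ = _ := by
        rw [sum_const, card_univ, hcard, nsmul_eq_mul, Finset.sum_pow']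
        simp [Fintype.piFinset_univ]

/-! ### Haar expectations of products of entries -/

lemma exists_flat_row {n : ℕ} (i : Fin n) :
    ∃ O : Matrix.orthogonalGroup (Fin n) ℝ, ∀ a,
      (O : Matrix (Fin n) (Fin n) ℝ) i a = (Real.sqrt n)⁻¹ := by
  have hn : (0 : ℝ) < n := by exact_mod_cast i.pos
  let v : EuclideanSpace ℝ (Fin n) := WithLp.toLp 2 fun _ => (Real.sqrt n)⁻¹
  have hv : ‖v‖ = 1 := by
    rw [EuclideanSpace.norm_eq]
    simp [v, hn.ne']
  obtain ⟨b, hb⟩ := Orthonormal.exists_orthonormalBasis_extension_of_card_eq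
    (𝕜 := ℝ) (E := EuclideanSpace ℝ (Fin n)) (ι := Fin n) (by simp) (v := fun _ => v) (s := {i})
    (by
      constructor
      · intro j; simpa using hv
      · intro j j' h; exact absurd (Subsingleton.elim j j') h)
  refine ⟨⟨Matrix.of fun j a => b j a, ?_⟩, fun a => ?_⟩
  · rw [Matrix.mem_orthogonalGroup_iff]
    ext j j'
    have := orthonormal_iff_ite.1 b.orthonormal j' j
    rw [PiLp.inner_apply] at this
    simp only [Matrix.mul_apply, Matrix.of_apply, Matrix.one_apply]
    simpa [eq_comm, mul_comm] using this
  · simp [hb i rfl, v]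

instance matrixBorel (n : ℕ) : BorelSpace (Matrix (Fin n) (Fin n) ℝ) :=
  inferInstanceAs (BorelSpace (Fin n → Fin n → ℝ))

instance orthoBorel (n : ℕ) : BorelSpace (Matrix.orthogonalGroup (Fin n) ℝ) :=
  Subtype.borelSpace _

section haar

variable {n : ℕ} (μ : Measure (Matrix.orthogonalGroup (Fin n) ℝ))

lemma abs_entry_le_one (W : Matrix.orthogonalGroup (Fin n) ℝ) (i j : Fin n) :
    |(W : Matrix (Fin n) (Fin n) ℝ) i j| ≤ 1 := by
  simpa using entry_norm_bound_of_unitary (𝕜 := ℝ) W.2 i j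

lemma sum_sq_col (W : Matrix.orthogonalGroup (Fin n) ℝ) (j : Fin n) :
    ∑ a, (W : Matrix (Fin n) (Fin n) ℝ) a j ^ 2 = 1 := by
  have h := congrFun (congrFun ((Matrix.mem_orthogonalGroup_iff' _ _).1 W.2) j) j
  simpa [Matrix.mul_apply, sq] using h

lemma measurable_entry (i j : Fin n) :
    Measurable fun W : Matrix.orthogonalGroup (Fin n) ℝ =>
      (W : Matrix (Fin n) (Fin n) ℝ) i j :=
  (measurable_pi_apply j).comp ((measurable_pi_apply i).comp
    (measurable_subtype_coe (α := Fin n → Fin n → ℝ)))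

lemma integral_translate [μ.IsHaarMeasure] (O : Matrix.orthogonalGroup (Fin n) ℝ)
    (F : Matrix (Fin n) (Fin n) ℝ → ℝ) :
    ∫ W, F ((O : Matrix (Fin n) (Fin n) ℝ) * (W : Matrix (Fin n) (Fin n) ℝ)) ∂μ
      = ∫ W, F (W : Matrix (Fin n) (Fin n) ℝ) ∂μ :=
  integral_mul_left_eq_self (μ := μ)
    (fun W : Matrix.orthogonalGroup (Fin n) ℝ => F (W : Matrix (Fin n) (Fin n) ℝ)) O

lemma integrable_prod_entry [IsProbabilityMeasure μ] {ι : Type*} [Fintype ι] (r c : ι → Fin n) :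
    Integrable (fun W : Matrix.orthogonalGroup (Fin n) ℝ =>
      ∏ l, (W : Matrix (Fin n) (Fin n) ℝ) (r l) (c l)) μ := by
  refine Integrable.of_bound (C := 1)
    (Finset.measurable_prod _ fun l _ => measurable_entry _ _).aestronglyMeasurable
    (ae_of_all _ fun W => ?_)
  rw [Real.norm_eq_abs, abs_prod]
  exact prod_le_one (fun _ _ => abs_nonneg _) fun _ _ => abs_entry_le_one W _ _

/-- Sign symmetry: if row `v` occurs an odd number of times, negating that row of `W` negates the
product. -/
lemma integral_prod_eq_zero [μ.IsHaarMeasure] {ι : Type*} [Fintype ι] (r c : ι → Fin n)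
    (h : ¬ EvenFibers r) :
    ∫ W, ∏ l, (W : Matrix (Fin n) (Fin n) ℝ) (r l) (c l) ∂μ = 0 := by
  simp only [EvenFibers, not_forall, Nat.not_even_iff_odd] at h
  obtain ⟨v, hv⟩ := h
  let d : Fin n → ℝ := fun i => if i = v then -1 else 1
  have hd : ∀ i, d i * d i = 1 := by intro i; by_cases h : i = v <;> simp [d, h]
  let O : Matrix.orthogonalGroup (Fin n) ℝ := ⟨Matrix.diagonal d, by
    rw [Matrix.mem_orthogonalGroup_iff, Matrix.diagonal_transpose,
      Matrix.diagonal_mul_diagonal]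
    simp [hd]⟩
  have key := integral_translate μ O fun M => ∏ l, M (r l) (c l)
  have hsign : ∏ l, d (r l) = -1 := by
    rw [Fintype.card_subtype] at hv
    simp only [d, prod_ite, prod_const, one_pow, mul_one]
    exact hv.neg_one_pow
  simp only [O, Matrix.diagonal_mul, prod_mul_distrib, hsign, integral_const_mul] at key
  linarith

open Classical in
/-- The moments of a single entry: by left invariance `W i j` may be replaced by
`n^{-1/2} ∑ₐ W a j`, whose power is expanded. -/
lemma moment_le [μ.IsHaarMeasure] [IsProbabilityMeasure μ] (k : ℕ) (i j : Fin n) :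
    ∫ W, (W : Matrix (Fin n) (Fin n) ℝ) i j ^ (2 * k) ∂μ
      ≤ ((2 * k).factorial : ℝ) * ((n : ℝ) ^ k)⁻¹ := by
  obtain ⟨O, hO⟩ := exists_flat_row i
  rw [← integral_translate μ O fun M => M i j ^ (2 * k)]
  have hexp : ∀ W : Matrix.orthogonalGroup (Fin n) ℝ,
      ((O : Matrix (Fin n) (Fin n) ℝ) * (W : Matrix (Fin n) (Fin n) ℝ)) i j ^ (2 * k)
        = ((n : ℝ) ^ k)⁻¹ * ∑ f : Fin (2 * k) → Fin n,
            ∏ l, (W : Matrix (Fin n) (Fin n) ℝ) (f l) j := by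
    intro W
    simp only [Matrix.mul_apply, hO]
    rw [← mul_sum, mul_pow, Finset.sum_pow', Fintype.piFinset_univ, inv_pow, pow_mul,
      Real.sq_sqrt (Nat.cast_nonneg n)]
  simp only [hexp]
  rw [integral_const_mul, mul_comm]
  refine mul_le_mul_of_nonneg_right ?_ (by positivity)
  rw [integral_finsetSum _ fun f _ => integrable_prod_entry μ f fun _ => j]
  calc _ = ∑ f : Fin (2 * k) → Fin n, ∫ W : Matrix.orthogonalGroup (Fin n) ℝ,
        (if EvenFibers f then ∏ l, (W : Matrix (Fin n) (Fin n) ℝ) (f l) j else 0) ∂μ := by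
        refine sum_congr rfl fun f _ => ?_
        split_ifs with h
        · rfl
        · simpa using integral_prod_eq_zero μ f (fun _ => j) h
    _ = ∫ W : Matrix.orthogonalGroup (Fin n) ℝ, ∑ f : Fin (2 * k) → Fin n,
        (if EvenFibers f then ∏ l, (W : Matrix (Fin n) (Fin n) ℝ) (f l) j else 0) ∂μ := by
        rw [integral_finsetSum]
        intro f _
        split_ifs
        · exact integrable_prod_entry μ f fun _ => j
        · exact integrable_zero _ _ _
    _ ≤ ∫ W : Matrix.orthogonalGroup (Fin n) ℝ, ((2 * k).factorial : ℝ) ∂μ := by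
        refine integral_mono (integrable_finsetSum _ fun f _ => ?_) (integrable_const _)
          fun W => ?_
        · split_ifs
          · exact integrable_prod_entry μ f fun _ => j
          · exact integrable_zero _ _ _
        · have h := sum_evenFibers_le (ι := Fin (2 * k)) (m := k) (by simp)
            (fun a => |(W : Matrix (Fin n) (Fin n) ℝ) a j|) fun _ => abs_nonneg _
          simp only [sq_abs, sum_sq_col, one_pow, mul_one] at h
          refine le_trans (sum_le_sum fun f _ => ?_) h
          split_ifs
          · exact (le_abs_self _).trans_eq (abs_prod _ _)
          · exact le_rfl
    _ = _ := by simp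

lemma prod_le_sum_pow {ι : Type*} [Fintype ι] {k : ℕ} (hk : 1 ≤ k)
    (hι : Fintype.card ι = 2 * k) (x : ι → ℝ) : ∏ l, x l ≤ ∑ l, x l ^ (2 * k) := by
  have : Nonempty ι := Fintype.card_pos_iff.1 (by omega)
  obtain ⟨l₀, -, h⟩ := exists_max_image univ (fun l => |x l|) univ_nonempty
  calc ∏ l, x l ≤ ∏ l, |x l| := (le_abs_self _).trans_eq (abs_prod _ _)
    _ ≤ ∏ _l : ι, |x l₀| := prod_le_prod (fun _ _ => abs_nonneg _) fun l _ => h l (mem_univ _)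
    _ = x l₀ ^ (2 * k) := by
        rw [prod_const, card_univ, hι, pow_mul, sq_abs, ← pow_mul]
    _ ≤ _ := single_le_sum (f := fun l => x l ^ (2 * k))
        (fun l _ => (even_two_mul k).pow_nonneg _) (mem_univ l₀)

lemma integral_prod_le [μ.IsHaarMeasure] [IsProbabilityMeasure μ] {ι : Type*} [Fintype ι]
    {k : ℕ} (hk : 1 ≤ k) (hι : Fintype.card ι = 2 * k) (r c : ι → Fin n) :
    ∫ W, ∏ l, (W : Matrix (Fin n) (Fin n) ℝ) (r l) (c l) ∂μ
      ≤ 2 * k * (2 * k).factorial * ((n : ℝ) ^ k)⁻¹ := by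
  have hint : ∀ l, Integrable (fun W : Matrix.orthogonalGroup (Fin n) ℝ =>
      (W : Matrix (Fin n) (Fin n) ℝ) (r l) (c l) ^ (2 * k)) μ := fun l => by
    simpa using integrable_prod_entry μ (fun _ : Fin (2 * k) => r l) (fun _ => c l)
  calc _ ≤ ∫ W : Matrix.orthogonalGroup (Fin n) ℝ,
        ∑ l, (W : Matrix (Fin n) (Fin n) ℝ) (r l) (c l) ^ (2 * k) ∂μ :=
        integral_mono (integrable_prod_entry μ r c) (integrable_finsetSum _ fun l _ => hint l)
          fun W => prod_le_sum_pow hk hι _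
    _ ≤ ∑ _l : ι, ((2 * k).factorial : ℝ) * ((n : ℝ) ^ k)⁻¹ := by
        rw [integral_finsetSum _ fun l _ => hint l]
        exact sum_le_sum fun l _ => moment_le μ k _ _
    _ = _ := by
        rw [sum_const, card_univ, hι, nsmul_eq_mul]; push_cast; ring

end haar

/-! ### Path expansion -/

/-- Entries of a matrix power as a sum over paths from `a` to `b` with interior vertices `p`: the
`l`-th edge goes from `Fin.cons a p l` to `Fin.snoc p b l`. -/
lemma pow_succ_apply_eq_sum {n : ℕ} (M : Matrix (Fin n) (Fin n) ℝ) (m : ℕ) (a b : Fin n) :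
    (M ^ (m + 1)) a b = ∑ p : Fin m → Fin n, ∏ l : Fin (m + 1),
      M (Fin.cons (α := fun _ => Fin n) a p l) (Fin.snoc (α := fun _ => Fin n) p b l) := by
  induction m generalizing a with
  | zero => simp [Fin.snoc]
  | succ m ih =>
    rw [pow_succ', Matrix.mul_apply, ← Equiv.sum_comp (Fin.consEquiv fun _ => Fin n),
      Fintype.sum_prod_type]
    refine sum_congr rfl fun d _ => ?_
    rw [ih, mul_sum]
    refine sum_congr rfl fun p _ => ?_
    rw [Fin.prod_univ_succ (n := m + 1)]
    simp [Fin.consEquiv, ← Fin.cons_snoc_eq_snoc_cons]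

/-- Removing the common starting point of two paths does not change the parity of multiplicities. -/
lemma evenFibers_of_cons {n m : ℕ} (a : Fin n) (p q : Fin m → Fin n)
    (h : EvenFibers (Sum.elim (Fin.cons (α := fun _ => Fin n) a p)
      (Fin.cons (α := fun _ => Fin n) a q))) :
    EvenFibers (Sum.elim p q) := by
  intro v
  have := h v
  rw [Fintype.card_subtype, card_filter, Fintype.sum_sum_type] at this ⊢
  rw [Fin.sum_univ_succ, Fin.sum_univ_succ] at this
  change Even (((if a = v then 1 else 0) + ∑ x, if p x = v then 1 else 0) +
    ((if a = v then 1 else 0) + ∑ x, if q x = v then 1 else 0)) at this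
  change Even ((∑ x, if p x = v then 1 else 0) + ∑ x, if q x = v then 1 else 0)
  rw [Nat.even_iff] at this ⊢
  omega

lemma hsNorm_sq {n : ℕ} (A : Matrix (Fin n) (Fin n) ℝ) :
    hsNorm A ^ 2 = ∑ i, ∑ j, A i j ^ 2 :=
  Real.sq_sqrt (sum_nonneg fun _ _ => sum_nonneg fun _ _ => sq_nonneg _)

open Classical in
/-- The bound for one entry of `(T W)ᵐ⁺¹ T`; integrability is included so that these bounds can be
summed over `a` and `b`. -/
lemma integral_entry_sq_le {n m : ℕ} (τ : Fin n → ℝ) (hτ : ∀ i, 0 ≤ τ i)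
    (μ : Measure (Matrix.orthogonalGroup (Fin n) ℝ)) [μ.IsHaarMeasure]
    [IsProbabilityMeasure μ] (a b : Fin n) :
    Integrable (fun W : Matrix.orthogonalGroup (Fin n) ℝ =>
      ((Matrix.diagonal τ * (W : Matrix (Fin n) (Fin n) ℝ)) ^ (m + 1) *
        Matrix.diagonal τ) a b ^ 2) μ ∧
    ∫ W, ((Matrix.diagonal τ * (W : Matrix (Fin n) (Fin n) ℝ)) ^ (m + 1) *
        Matrix.diagonal τ) a b ^ 2 ∂μ ≤
      τ a ^ 2 * τ b ^ 2 * ((2 * (m + 1 : ℕ) * (2 * (m + 1)).factorial *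
        ((n : ℝ) ^ (m + 1))⁻¹) * ((2 * m).factorial * (∑ i, τ i ^ 2) ^ m)) := by
  -- A pair of paths from `a` to `b` is encoded by its interior vertices `f : Fin m ⊕ Fin m → Fin n`;
  -- `R f` and `c f` list the row and column indices of the `2 (m + 1)` factors of `W`.
  let R : (Fin m ⊕ Fin m → Fin n) → Fin (m + 1) ⊕ Fin (m + 1) → Fin n := fun f =>
    Sum.elim (Fin.cons (α := fun _ => Fin n) a (f ∘ Sum.inl))
      (Fin.cons (α := fun _ => Fin n) a (f ∘ Sum.inr))
  let c : (Fin m ⊕ Fin m → Fin n) → Fin (m + 1) ⊕ Fin (m + 1) → Fin n := fun f =>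
    Sum.elim (Fin.snoc (α := fun _ => Fin n) (f ∘ Sum.inl) b)
      (Fin.snoc (α := fun _ => Fin n) (f ∘ Sum.inr) b)
  have hexp : ∀ W : Matrix.orthogonalGroup (Fin n) ℝ,
      ((Matrix.diagonal τ * (W : Matrix (Fin n) (Fin n) ℝ)) ^ (m + 1) *
        Matrix.diagonal τ) a b ^ 2 = ∑ f : Fin m ⊕ Fin m → Fin n,
          τ a ^ 2 * τ b ^ 2 * (∏ l, τ (f l)) *
            ∏ l, (W : Matrix (Fin n) (Fin n) ℝ) (R f l) (c f l) := by
    intro W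
    rw [Matrix.mul_diagonal, pow_succ_apply_eq_sum, mul_pow, sq (∑ _, _), sum_mul_sum,
      ← Equiv.sum_comp (Equiv.sumArrowEquivProdArrow (Fin m) (Fin m) (Fin n)).symm,
      Fintype.sum_prod_type, sum_mul]
    refine sum_congr rfl fun p _ => ?_
    rw [sum_mul]
    refine sum_congr rfl fun q _ => ?_
    have hp : ((Equiv.sumArrowEquivProdArrow (Fin m) (Fin m) (Fin n)).symm (p, q)) =
      Sum.elim p q := rfl
    rw [hp]
    simp only [R, c, Fintype.prod_sum_type, Matrix.diagonal_mul, prod_mul_distrib,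
      Sum.elim_inl, Sum.elim_inr, Sum.elim_comp_inl, Sum.elim_comp_inr]
    rw [Fin.prod_univ_succ (fun l => τ (Fin.cons (α := fun _ => Fin n) a p l)),
      Fin.prod_univ_succ (fun l => τ (Fin.cons (α := fun _ => Fin n) a q l))]
    simp only [Fin.cons_zero, Fin.cons_succ]
    ring
  have hint : ∀ f ∈ (univ : Finset (Fin m ⊕ Fin m → Fin n)),
      Integrable (fun W : Matrix.orthogonalGroup (Fin n) ℝ =>
        τ a ^ 2 * τ b ^ 2 * (∏ l, τ (f l)) *
            ∏ l, (W : Matrix (Fin n) (Fin n) ℝ) (R f l) (c f l)) μ :=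
    fun f _ => (integrable_prod_entry μ _ _).const_mul _
  simp only [hexp]
  refine ⟨integrable_finsetSum _ hint, ?_⟩
  rw [integral_finsetSum _ hint]
  set B : ℝ := 2 * (m + 1 : ℕ) * (2 * (m + 1)).factorial * ((n : ℝ) ^ (m + 1))⁻¹ with hB
  have hB0 : 0 ≤ B := by positivity
  calc _ ≤ ∑ f : Fin m ⊕ Fin m → Fin n, τ a ^ 2 * τ b ^ 2 * (B *
        (if EvenFibers f then ∏ l, τ (f l) else 0)) := by
        refine sum_le_sum fun f _ => ?_
        rw [integral_const_mul, mul_assoc]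
        refine mul_le_mul_of_nonneg_left ?_ (by positivity)
        split_ifs with h
        · rw [mul_comm]
          exact mul_le_mul_of_nonneg_right
            (integral_prod_le μ (Nat.succ_pos m) (by simp [two_mul]) _ _)
            (prod_nonneg fun _ _ => hτ _)
        · rw [integral_prod_eq_zero μ (R f) (c f)]
          · simp
          · intro h'
            apply h
            simpa using evenFibers_of_cons a _ _ h'
    _ = τ a ^ 2 * τ b ^ 2 * (B * ∑ f : Fin m ⊕ Fin m → Fin n,
        (if EvenFibers f then ∏ l, τ (f l) else 0)) := by
        rw [mul_sum, mul_sum]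
    _ ≤ _ := by
        have := sum_evenFibers_le (ι := Fin m ⊕ Fin m) (m := m) (by simp [two_mul]) τ hτ
        gcongr

end helpers

/-- Bound on the expected squared Hilbert--Schmidt norm of `(T W)ᵏ T`,
with `W` Haar-distributed on `O(n)`. -/
theorem expected_hs_norm_sq_bound (k : ℕ) (hk : 1 ≤ k) :
    ∃ C : ℝ, 0 < C ∧ ∀ n : ℕ, 1 ≤ n → ∀ τ : Fin n → ℝ, (∀ i, 0 ≤ τ i) →
      ∀ μ : Measure (Matrix.orthogonalGroup (Fin n) ℝ),
        μ.IsHaarMeasure → IsProbabilityMeasure μ →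
        (∫ W, hsNorm ((Matrix.diagonal τ * (W : Matrix (Fin n) (Fin n) ℝ)) ^ k *
            Matrix.diagonal τ) ^ 2 ∂μ)
          ≤ C * ((n : ℝ) ^ k)⁻¹ * hsNorm (Matrix.diagonal τ) ^ (2 * (k + 1)) := by
  obtain ⟨m, rfl⟩ : ∃ m, k = m + 1 := ⟨k - 1, by omega⟩
  refine ⟨2 * (m + 1 : ℕ) * (2 * (m + 1)).factorial * (2 * m).factorial, by positivity, ?_⟩
  intro n _ τ hτ μ hμ hμ'
  have hT : hsNorm (Matrix.diagonal τ) ^ 2 = ∑ i, τ i ^ 2 := by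
    rw [hsNorm_sq]
    refine Finset.sum_congr rfl fun i _ => ?_
    rw [Finset.sum_eq_single i]
    · simp
    · intro j _ hj; simp [Matrix.diagonal_apply_ne _ hj.symm]
    · simp
  rw [pow_mul, hT]
  simp only [hsNorm_sq]
  have H := fun a b => integral_entry_sq_le (m := m) τ hτ μ a b
  rw [integral_finsetSum _ fun a _ => integrable_finsetSum _ fun b _ => (H a b).1]
  simp_rw [integral_finsetSum Finset.univ fun b _ => (H _ b).1]
  refine (Finset.sum_le_sum fun a _ => Finset.sum_le_sum fun b _ => (H a b).2).trans_eq ?_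
  simp_rw [← Finset.sum_mul, ← Finset.mul_sum, ← Finset.sum_mul]
  ring
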